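/- arXiv:1810.09382 — 2 statements merged into one kernel-verified Lean document; each statement's English description precedes it below -/
import Mathlib

section
/- Let k be a field, let A be a smooth commutative k-algebra, let J ⊆ A be an ideal, and set Ā = A/J. Let I = ker(μ_A : A ⊗_k A → A) and Ī = ker(μ_Ā : Ā ⊗_k Ā → Ā). Then there is a short exact sequence of (Ā ⊗_k Ā)-modules 0 → J/J² → I ⊗_{A ⊗ A} (Ā ⊗ Ā) → Ī → 0, where the first map sends the class of j ∈ J to the class of j ⊗ 1 − 1 ⊗ j, and the second map is induced by the projection A ⊗_k A → Ā ⊗_k Ā. -/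
set_option synthInstance.maxHeartbeats 1000000
set_option maxHeartbeats 1000000

open TensorProduct

universe u

section helpers

open Algebra.TensorProduct in
/-- the element `a ⊗ 1 - 1 ⊗ a` -/
theorem cd_delta_mem (k A : Type*) [Field k] [CommRing A] [Algebra k A] (a : A) :
    a ⊗ₜ[k] (1 : A) - (1 : A) ⊗ₜ[k] a ∈ RingHom.ker (Algebra.TensorProduct.lmul' k (S := A)) := by
  rw [RingHom.mem_ker]; simp

theorem cd_ker (k A : Type*) [Field k] [CommRing A] [Algebra k A] (J : Ideal A) :
    RingHom.ker (Algebra.TensorProduct.map (Ideal.Quotient.mkₐ k J) (Ideal.Quotient.mkₐ k J)) =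
      J.map (Algebra.TensorProduct.includeLeft : A →ₐ[k] A ⊗[k] A) ⊔
      J.map (Algebra.TensorProduct.includeRight : A →ₐ[k] A ⊗[k] A) := by
  rw [Algebra.TensorProduct.map_ker _ _ (Ideal.Quotient.mkₐ_surjective k J)
    (Ideal.Quotient.mkₐ_surjective k J)]
  have e : RingHom.ker (Ideal.Quotient.mkₐ k J) = J := Ideal.Quotient.mkₐ_ker k J
  rw [e]

theorem cd_L1 (k A : Type*) [Field k] [CommRing A] [Algebra k A] (J : Ideal A)
    (K I : Ideal (A ⊗[k] A))
    (hK : K = J.map (Algebra.TensorProduct.includeLeft : A →ₐ[k] A ⊗[k] A) ⊔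
      J.map (Algebra.TensorProduct.includeRight : A →ₐ[k] A ⊗[k] A))
    (hI : I = RingHom.ker (Algebra.TensorProduct.lmul' k (S := A))) (a : A) (ha : a ∈ J ^ 2) :
    a ⊗ₜ[k] (1 : A) - (1 : A) ⊗ₜ[k] a ∈ K * I := by
  rw [pow_two] at ha
  refine Submodule.mul_induction_on ha ?_ ?_
  · intro m hm n hn
    have h1 : (m ⊗ₜ[k] (1 : A)) ∈ K := by
      rw [hK]; exact Ideal.mem_sup_left (Ideal.mem_map_of_mem _ hm)
    have h2 : ((1 : A) ⊗ₜ[k] n) ∈ K := by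
      rw [hK]; exact Ideal.mem_sup_right (Ideal.mem_map_of_mem _ hn)
    have e : (m * n) ⊗ₜ[k] (1 : A) - (1 : A) ⊗ₜ[k] (m * n) =
        (m ⊗ₜ[k] (1 : A)) * (n ⊗ₜ[k] (1 : A) - (1 : A) ⊗ₜ[k] n) +
        ((1 : A) ⊗ₜ[k] n) * (m ⊗ₜ[k] (1 : A) - (1 : A) ⊗ₜ[k] m) := by
      simp only [mul_sub, Algebra.TensorProduct.tmul_mul_tmul, one_mul, mul_one, mul_comm n m]
      abel
    rw [e]
    refine add_mem (Ideal.mul_mem_mul h1 ?_) (Ideal.mul_mem_mul h2 ?_) <;> rw [hI] <;>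
      exact cd_delta_mem k A _
  · intro x y hx hy
    have e : (x + y) ⊗ₜ[k] (1 : A) - (1 : A) ⊗ₜ[k] (x + y) =
      (x ⊗ₜ[k] (1 : A) - (1 : A) ⊗ₜ[k] x) + (y ⊗ₜ[k] (1 : A) - (1 : A) ⊗ₜ[k] y) := by
      rw [TensorProduct.add_tmul, TensorProduct.tmul_add]; abel
    rw [e]; exact add_mem hx hy

theorem cd_L2 (k A : Type*) [Field k] [CommRing A] [Algebra k A] (J : Ideal A)
    (K I : Ideal (A ⊗[k] A))
    (hK : K = J.map (Algebra.TensorProduct.includeLeft : A →ₐ[k] A ⊗[k] A) ⊔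
      J.map (Algebra.TensorProduct.includeRight : A →ₐ[k] A ⊗[k] A))
    (hI : I = RingHom.ker (Algebra.TensorProduct.lmul' k (S := A)))
    (x : A ⊗[k] A) (hxK : x ∈ K) (hxI : x ∈ I) :
    ∃ j ∈ J, x - (j ⊗ₜ[k] (1 : A) - (1 : A) ⊗ₜ[k] j) ∈ K * I := by
  have key : ∀ ι : A →ₐ[k] A ⊗[k] A, (∀ a, Algebra.TensorProduct.lmul' k (S := A) (ι a) = a) →
      J.map ι ≤ K → ∀ y ∈ J.map ι, ∃ j ∈ J, y - ι j ∈ K * I := by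
    intro ι hι hle y hy
    refine Submodule.span_induction (p := fun y _ => ∃ j ∈ J, y - ι j ∈ K * I) ?_ ?_ ?_ ?_ hy
    · rintro _ ⟨j, hj, rfl⟩
      exact ⟨j, hj, by simp⟩
    · exact ⟨0, zero_mem _, by simp⟩
    · rintro y z _ _ ⟨j, hj, h⟩ ⟨j', hj', h'⟩
      refine ⟨j + j', add_mem hj hj', ?_⟩
      have := add_mem h h'
      rw [map_add]; convert this using 1; abel
    · rintro b y _ ⟨j, hj, h⟩
      refine ⟨Algebra.TensorProduct.lmul' k (S := A) b * j, Ideal.mul_mem_left _ _ hj, ?_⟩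
      have h1 : ι j * (b - ι (Algebra.TensorProduct.lmul' k (S := A) b)) ∈ K * I := by
        refine Ideal.mul_mem_mul (hle (Ideal.mem_map_of_mem _ hj)) ?_
        rw [hI, RingHom.mem_ker, map_sub, hι, sub_self]
      have := add_mem (Ideal.mul_mem_left _ b h) h1
      convert this using 1
      rw [map_mul, smul_eq_mul]; ring
  have hx := hxK
  rw [hK] at hx
  obtain ⟨y, hy, z, hz, rfl⟩ := Submodule.mem_sup.1 hx
  have hle1 : J.map (Algebra.TensorProduct.includeLeft : A →ₐ[k] A ⊗[k] A) ≤ K := by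
    rw [hK]; exact le_sup_left
  have hle2 : J.map (Algebra.TensorProduct.includeRight : A →ₐ[k] A ⊗[k] A) ≤ K := by
    rw [hK]; exact le_sup_right
  obtain ⟨j, hj, h⟩ := key Algebra.TensorProduct.includeLeft (fun a => by simp) hle1 y hy
  obtain ⟨j', hj', h'⟩ := key Algebra.TensorProduct.includeRight (fun a => by simp) hle2 z hz
  rw [Algebra.TensorProduct.includeLeft_apply] at h
  rw [Algebra.TensorProduct.includeRight_apply] at h'
  have hs := add_mem h h'
  have hs2 := Ideal.mul_le_right (I := K) (J := I) hs
  have hs3 := sub_mem hxI hs2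
  rw [hI, RingHom.mem_ker] at hs3
  have h0 : j + j' = 0 := by
    rw [← hs3]
    have e1 : y + z - (y - j ⊗ₜ[k] (1 : A) + (z - (1 : A) ⊗ₜ[k] j')) =
      j ⊗ₜ[k] (1 : A) + (1 : A) ⊗ₜ[k] j' := by abel
    rw [e1, map_add, Algebra.TensorProduct.lmul'_apply_tmul,
      Algebra.TensorProduct.lmul'_apply_tmul, mul_one, one_mul]
  have e : j' = - j := by rw [eq_neg_iff_add_eq_zero, add_comm]; exact h0
  refine ⟨j, hj, ?_⟩
  rw [e, TensorProduct.tmul_neg] at hs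
  have e2 : y + z - (j ⊗ₜ[k] (1 : A) - (1 : A) ⊗ₜ[k] j) =
    y - j ⊗ₜ[k] (1 : A) + (z - -((1 : A) ⊗ₜ[k] j)) := by abel
  rw [e2]
  exact hs

theorem cd_L3 (k A : Type*) [Field k] [CommRing A] [Algebra k A] (J : Ideal A)
    (K I : Ideal (A ⊗[k] A))
    (hK : K = J.map (Algebra.TensorProduct.includeLeft : A →ₐ[k] A ⊗[k] A) ⊔
      J.map (Algebra.TensorProduct.includeRight : A →ₐ[k] A ⊗[k] A))
    (hI : I = RingHom.ker (Algebra.TensorProduct.lmul' k (S := A))) (j : A) (hj : j ∈ J)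
    (h : j ⊗ₜ[k] (1 : A) - (1 : A) ⊗ₜ[k] j ∈ K * I) : j ∈ J ^ 2 := by
  obtain ⟨q, hq⟩ := LinearMap.exists_leftInverse_of_injective (J.restrictScalars k).subtype
    (by simp)
  let p : A →ₗ[k] A := (J.restrictScalars k).subtype ∘ₗ q
  have hp1 : ∀ a, p a ∈ J := fun a => (q a).2
  have hp2 : ∀ a ∈ J, p a = a := fun a ha => by
    have := LinearMap.congr_fun hq ⟨a, ha⟩
    exact congrArg Subtype.val this
  let φ : A ⊗[k] A →ₗ[k] A := LinearMap.mul' k A ∘ₗ TensorProduct.map p LinearMap.id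
  have hφ : ∀ a b, φ (a ⊗ₜ b) = p a * b := fun a b => by simp [φ]
  have hL : ∀ x ∈ J.map (Algebra.TensorProduct.includeLeft : A →ₐ[k] A ⊗[k] A),
      ∀ b, φ (x * b) = Algebra.TensorProduct.lmul' k (S := A) (x * b) := by
    intro x hx
    refine Submodule.span_induction (p := fun x _ => ∀ b, φ (x * b) =
      Algebra.TensorProduct.lmul' k (S := A) (x * b)) ?_ ?_ ?_ ?_ hx
    · rintro _ ⟨j, hj, rfl⟩ b
      induction b with
      | zero => simp
      | add x y hx hy => rw [mul_add, map_add, map_add, hx, hy]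
      | tmul a b =>
        have : (Algebra.TensorProduct.includeLeft : A →ₐ[k] A ⊗[k] A) j = j ⊗ₜ 1 := rfl
        change φ ((j ⊗ₜ[k] (1 : A)) * _) = Algebra.TensorProduct.lmul' k ((j ⊗ₜ[k] (1 : A)) * _)
        rw [Algebra.TensorProduct.tmul_mul_tmul, hφ, hp2 _ (Ideal.mul_mem_right _ _ hj)]
        simp
    · simp
    · intro x y _ _ hx hy b
      rw [add_mul, map_add, map_add, hx, hy]
    · intro c x _ hx b
      rw [smul_eq_mul, mul_comm c x, mul_assoc]; exact hx _
  have hR : ∀ x ∈ J.map (Algebra.TensorProduct.includeRight : A →ₐ[k] A ⊗[k] A),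
      ∀ b, φ (x * b) ∈ J ^ 2 := by
    intro x hx
    refine Submodule.span_induction (p := fun x _ => ∀ b, φ (x * b) ∈ J ^ 2) ?_ ?_ ?_ ?_ hx
    · rintro _ ⟨j, hj, rfl⟩ b
      induction b with
      | zero => simp
      | add x y hx hy => rw [mul_add, map_add]; exact add_mem hx hy
      | tmul a b =>
        change φ (((1 : A) ⊗ₜ[k] j) * _) ∈ _
        rw [Algebra.TensorProduct.tmul_mul_tmul, hφ, pow_two]
        exact Ideal.mul_mem_mul (hp1 _) (Ideal.mul_mem_right _ _ hj)
    · simp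
    · intro x y _ _ hx hy b
      rw [add_mul, map_add]; exact add_mem (hx b) (hy b)
    · intro c x _ hx b
      rw [smul_eq_mul, mul_comm c x, mul_assoc]; exact hx _
  have hKI : ∀ x ∈ K * I, φ x ∈ J ^ 2 := by
    intro x hx
    refine Submodule.mul_induction_on hx ?_ ?_
    · intro m hm n hn
      rw [hK] at hm
      obtain ⟨y, hy, z, hz, rfl⟩ := Submodule.mem_sup.1 hm
      rw [hI, RingHom.mem_ker] at hn
      rw [add_mul, map_add, hL y hy, map_mul, hn, mul_zero, zero_add]
      exact hR z hz n
    · intro x y hx hy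
      rw [map_add]; exact add_mem hx hy
  have h1 := hKI _ h
  rw [map_sub, hφ, hφ, hp2 j hj, mul_one] at h1
  have h2 : p 1 * j ∈ J ^ 2 := by rw [pow_two]; exact Ideal.mul_mem_mul (hp1 _) hj
  have := add_mem h1 h2
  simpa using this

/-- `M ⊗ C ≃ M / K M` when `C` is a quotient of `B` with kernel `K`. -/
theorem cd_equiv (B C M : Type*) [CommRing B] [CommRing C] [Algebra B C] [AddCommGroup M]
    [Module B M] (hs : Function.Surjective (algebraMap B C)) (K : Ideal B)
    (hK : K = RingHom.ker (algebraMap B C)) :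
    (∀ s : M ⊗[B] C, ∃ m : M, s = m ⊗ₜ 1) ∧
    ∀ m : M, m ⊗ₜ[B] (1 : C) = 0 ↔ m ∈ K • (⊤ : Submodule B M) := by
  constructor
  · intro s
    induction s with
    | zero => exact ⟨0, by simp⟩
    | add x y hx hy =>
      obtain ⟨m, rfl⟩ := hx
      obtain ⟨n, rfl⟩ := hy
      exact ⟨m + n, by rw [TensorProduct.add_tmul]⟩
    | tmul m c =>
      obtain ⟨b, rfl⟩ := hs c
      refine ⟨b • m, ?_⟩
      rw [TensorProduct.smul_tmul, Algebra.smul_def, mul_one]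
  · intro m
    subst hK
    let e : (B ⧸ RingHom.ker (algebraMap B C)) ≃ₗ[B] C :=
      (Ideal.quotientKerAlgEquivOfSurjective (f := Algebra.ofId B C) hs).toLinearEquiv
    have he : e 1 = 1 := map_one (Ideal.quotientKerAlgEquivOfSurjective (f := Algebra.ofId B C) hs)
    let E := (TensorProduct.congr (LinearEquiv.refl B M) e.symm) ≪≫ₗ
      TensorProduct.tensorQuotEquivQuotSMul M (RingHom.ker (algebraMap B C))
    have hE : E (m ⊗ₜ 1) = Submodule.Quotient.mk m := by
      have : e.symm 1 = 1 := by rw [← he, e.symm_apply_apply]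
      simp only [E, LinearEquiv.trans_apply, TensorProduct.congr_tmul, LinearEquiv.refl_apply, this]
      have := TensorProduct.tensorQuotEquivQuotSMul_tmul_mk (M := M)
        (RingHom.ker (algebraMap B C)) m 1
      simpa using this
    rw [← E.map_eq_zero_iff, hE, Submodule.Quotient.mk_eq_zero]

theorem cd_desc (k M N X : Type*) [Field k] [AddCommGroup M] [AddCommGroup N] [AddCommMonoid X]
    [Module k M] [Module k N] [Module k X] (p : M →ₗ[k] N) (hp : Function.Surjective p)
    (g : M →ₗ[k] X) (h : ∀ m, p m = 0 → g m = 0) : ∃ f : N →ₗ[k] X, ∀ m, f (p m) = g m := by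
  obtain ⟨t, ht⟩ := p.exists_rightInverse_of_surjective (LinearMap.range_eq_top.2 hp)
  refine ⟨g ∘ₗ t, fun m => ?_⟩
  have h1 : p (t (p m)) = p m := LinearMap.congr_fun ht (p m)
  have h2 : g (t (p m) - m) = 0 := h _ (by rw [map_sub, h1, sub_self])
  have h3 : g (t (p m) - m + m) = g m := by rw [map_add, h2, zero_add]
  rwa [sub_add_cancel] at h3

end helpers

variable (k : Type u) [Field k]
variable (A : Type u) [CommRing A] [Algebra k A]
variable [Algebra.FormallySmooth k A] [Algebra.FiniteType k A]
variable (J : Ideal A)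

/-- Let `k` be a field, `A` a smooth (formally smooth and of finite type)
commutative `k`-algebra, `J ⊆ A` an ideal and `Ā = A/J`.  Let `I = ker (μ_A : A ⊗ A → A)` and
`Ī = ker (μ_Ā : Ā ⊗ Ā → Ā)`.  Then there is a short exact sequence of `(Ā ⊗_k Ā)`-modules
`0 → J/J² → I ⊗_{A ⊗ A} (Ā ⊗ Ā) → Ī → 0`,
where the first map sends the class of `j ∈ J` to the class of `j ⊗ 1 − 1 ⊗ j`, and the second
map is induced by the projection `A ⊗_k A → Ā ⊗_k Ā`. -/
theorem conormal_diagonal_ses_of_smooth :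
    letI : Algebra (A ⊗[k] A) ((A ⧸ J) ⊗[k] (A ⧸ J)) :=
      (Algebra.TensorProduct.map (Ideal.Quotient.mkₐ k J)
        (Ideal.Quotient.mkₐ k J)).toRingHom.toAlgebra
    letI : Module k (↥(RingHom.ker (Algebra.TensorProduct.lmul' k (S := A)))
        ⊗[A ⊗[k] A] ((A ⧸ J) ⊗[k] (A ⧸ J))) :=
      Module.compHom _ (algebraMap k (A ⊗[k] A))
    ∀ (I : Ideal (A ⊗[k] A)), I = RingHom.ker (Algebra.TensorProduct.lmul' k (S := A)) →
    ∀ (Ibar : Ideal ((A ⧸ J) ⊗[k] (A ⧸ J))),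
      Ibar = RingHom.ker (Algebra.TensorProduct.lmul' k (S := A ⧸ J)) →
    ∀ β : (↥(RingHom.ker (Algebra.TensorProduct.lmul' k (S := A)))
        ⊗[A ⊗[k] A] ((A ⧸ J) ⊗[k] (A ⧸ J))) →ₗ[A ⊗[k] A] ((A ⧸ J) ⊗[k] (A ⧸ J)),
      β = TensorProduct.lift ((LinearMap.lsmul (A ⊗[k] A) ((A ⧸ J) ⊗[k] (A ⧸ J))).comp
        (Submodule.subtype (RingHom.ker (Algebra.TensorProduct.lmul' k (S := A))))) →
    ∃ f : J.Cotangent →ₗ[k]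
        (↥(RingHom.ker (Algebra.TensorProduct.lmul' k (S := A)))
          ⊗[A ⊗[k] A] ((A ⧸ J) ⊗[k] (A ⧸ J))),
      (∀ (j : ↥J)
        (h : ((j : A) ⊗ₜ[k] (1 : A) - (1 : A) ⊗ₜ[k] (j : A)) ∈
          RingHom.ker (Algebra.TensorProduct.lmul' k (S := A))),
        f (J.toCotangent j) =
          (⟨(j : A) ⊗ₜ[k] (1 : A) - (1 : A) ⊗ₜ[k] (j : A), h⟩ :
            ↥(RingHom.ker (Algebra.TensorProduct.lmul' k (S := A))))
            ⊗ₜ[A ⊗[k] A] (1 : (A ⧸ J) ⊗[k] (A ⧸ J))) ∧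
      Function.Injective f ∧
      (∀ s, β s ∈ Ibar) ∧
      (∀ s, β s = 0 ↔ s ∈ LinearMap.range f) ∧
      (∀ z ∈ Ibar, ∃ s, β s = z) := by
  let alg : Algebra (A ⊗[k] A) ((A ⧸ J) ⊗[k] (A ⧸ J)) :=
    (Algebra.TensorProduct.map (Ideal.Quotient.mkₐ k J)
      (Ideal.Quotient.mkₐ k J)).toRingHom.toAlgebra
  let mod : Module k (↥(RingHom.ker (Algebra.TensorProduct.lmul' k (S := A)))
      ⊗[A ⊗[k] A] ((A ⧸ J) ⊗[k] (A ⧸ J))) :=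
    Module.compHom _ (algebraMap k (A ⊗[k] A))
  intro I hI Ibar hIbar β hβ
  let K : Ideal (A ⊗[k] A) := RingHom.ker (algebraMap (A ⊗[k] A) ((A ⧸ J) ⊗[k] (A ⧸ J)))
  have hK : K = J.map (Algebra.TensorProduct.includeLeft : A →ₐ[k] A ⊗[k] A) ⊔
      J.map (Algebra.TensorProduct.includeRight : A →ₐ[k] A ⊗[k] A) := cd_ker k A J
  have hsurj : Function.Surjective (algebraMap (A ⊗[k] A) ((A ⧸ J) ⊗[k] (A ⧸ J))) :=
    TensorProduct.map_surjective (Ideal.Quotient.mkₐ_surjective k J)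
      (Ideal.Quotient.mkₐ_surjective k J)
  obtain ⟨hE1, hE2⟩ := cd_equiv (A ⊗[k] A) ((A ⧸ J) ⊗[k] (A ⧸ J)) (RingHom.ker (Algebra.TensorProduct.lmul' k (S := A))) hsurj K rfl
  have hE3 : ∀ m : (RingHom.ker (Algebra.TensorProduct.lmul' k (S := A))), m ⊗ₜ[A ⊗[k] A] (1 : (A ⧸ J) ⊗[k] (A ⧸ J)) = 0 ↔
      (m : A ⊗[k] A) ∈ K * (RingHom.ker (Algebra.TensorProduct.lmul' k (S := A))) := by
    intro m
    rw [hE2, Submodule.mem_smul_top_iff, smul_eq_mul]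
  have hβ1 : ∀ m : (RingHom.ker (Algebra.TensorProduct.lmul' k (S := A))), β (m ⊗ₜ[A ⊗[k] A] (1 : (A ⧸ J) ⊗[k] (A ⧸ J))) =
      algebraMap (A ⊗[k] A) ((A ⧸ J) ⊗[k] (A ⧸ J)) m := by
    intro m
    rw [hβ, TensorProduct.lift.tmul]
    change (m : A ⊗[k] A) • (1 : (A ⧸ J) ⊗[k] (A ⧸ J)) = _
    rw [Algebra.smul_def, mul_one]
  have hmu : ∀ x : A ⊗[k] A, Algebra.TensorProduct.lmul' k (S := A ⧸ J)
      (algebraMap (A ⊗[k] A) ((A ⧸ J) ⊗[k] (A ⧸ J)) x) =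
      Ideal.Quotient.mk J (Algebra.TensorProduct.lmul' k (S := A) x) := by
    intro x
    change Algebra.TensorProduct.lmul' k (S := A ⧸ J) (Algebra.TensorProduct.map
      (Ideal.Quotient.mkₐ k J) (Ideal.Quotient.mkₐ k J) x) = _
    induction x with
    | zero => simp
    | add x y hx hy => simp only [map_add, hx, hy]
    | tmul a b => simp
  let d : J →+ ((RingHom.ker (Algebra.TensorProduct.lmul' k (S := A))) ⊗[A ⊗[k] A] ((A ⧸ J) ⊗[k] (A ⧸ J))) :=
    { toFun := fun j => (⟨(j : A) ⊗ₜ[k] (1 : A) - (1 : A) ⊗ₜ[k] (j : A), cd_delta_mem k A j⟩ : (RingHom.ker (Algebra.TensorProduct.lmul' k (S := A))))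
        ⊗ₜ[A ⊗[k] A] (1 : (A ⧸ J) ⊗[k] (A ⧸ J))
      map_zero' := by
        rw [hE3]; simp
      map_add' := by
        intro x y
        rw [← TensorProduct.add_tmul]
        congr 1
        apply Subtype.ext
        simp only [Submodule.coe_add, TensorProduct.add_tmul, TensorProduct.tmul_add]
        abel }
  let g : J →ₗ[k] ((RingHom.ker (Algebra.TensorProduct.lmul' k (S := A))) ⊗[A ⊗[k] A] ((A ⧸ J) ⊗[k] (A ⧸ J))) :=
    { d with
      map_smul' := by
        intro c x
        change d (c • x) = (algebraMap k (A ⊗[k] A) c) • d x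
        change _ ⊗ₜ[A ⊗[k] A] _ = _ • (_ ⊗ₜ[A ⊗[k] A] _)
        rw [TensorProduct.smul_tmul']
        congr 1
        apply Subtype.ext
        change (c • (x : A)) ⊗ₜ[k] (1 : A) - (1 : A) ⊗ₜ[k] (c • (x : A)) =
          (algebraMap k (A ⊗[k] A) c) * ((x : A) ⊗ₜ[k] (1 : A) - (1 : A) ⊗ₜ[k] (x : A))
        rw [← Algebra.smul_def, smul_sub, TensorProduct.smul_tmul', TensorProduct.tmul_smul] }
  obtain ⟨f, hf⟩ := cd_desc k J J.Cotangent _ (J.toCotangent.restrictScalars k)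
    J.toCotangent_surjective g (by
      intro m hm
      have hm2 := (J.toCotangent_eq_zero m).1 hm
      exact (hE3 ⟨_, cd_delta_mem k A m⟩).2 (cd_L1 k A J K (RingHom.ker (Algebra.TensorProduct.lmul' k (S := A))) hK rfl _ hm2))
  have hf' : ∀ j : J, f (J.toCotangent j) =
      (⟨(j : A) ⊗ₜ[k] (1 : A) - (1 : A) ⊗ₜ[k] (j : A), cd_delta_mem k A j⟩ : (RingHom.ker (Algebra.TensorProduct.lmul' k (S := A))))
        ⊗ₜ[A ⊗[k] A] (1 : (A ⧸ J) ⊗[k] (A ⧸ J)) := fun j => hf j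
  refine ⟨f, fun j h => hf' j, ?_, ?_, ?_, ?_⟩
  · rw [injective_iff_map_eq_zero]
    intro c hc
    obtain ⟨j, rfl⟩ := J.toCotangent_surjective c
    rw [hf', hE3] at hc
    exact (J.toCotangent_eq_zero j).2 (cd_L3 k A J K (RingHom.ker (Algebra.TensorProduct.lmul' k (S := A))) hK rfl _ j.2 hc)
  · intro s
    obtain ⟨m, rfl⟩ := hE1 s
    rw [hβ1, hIbar, RingHom.mem_ker, hmu]
    have : Algebra.TensorProduct.lmul' k (S := A) (m : A ⊗[k] A) = 0 := m.2
    rw [this, map_zero]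
  · intro s
    constructor
    · intro h
      obtain ⟨m, rfl⟩ := hE1 s
      rw [hβ1] at h
      obtain ⟨j, hj, hx⟩ := cd_L2 k A J K (RingHom.ker (Algebra.TensorProduct.lmul' k (S := A))) hK rfl m h m.2
      refine ⟨J.toCotangent ⟨j, hj⟩, ?_⟩
      rw [hf', eq_comm, ← sub_eq_zero, ← TensorProduct.sub_tmul, hE3]
      exact hx
    · rintro ⟨c, rfl⟩
      obtain ⟨j, rfl⟩ := J.toCotangent_surjective c
      rw [hf', hβ1]
      change _ ∈ K
      rw [hK]
      exact sub_mem (Ideal.mem_sup_left (Ideal.mem_map_of_mem _ j.2))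
        (Ideal.mem_sup_right (Ideal.mem_map_of_mem _ j.2))
  · intro z hz
    obtain ⟨x, rfl⟩ := hsurj z
    rw [hIbar, RingHom.mem_ker, hmu, Ideal.Quotient.eq_zero_iff_mem] at hz
    refine ⟨(⟨x - Algebra.TensorProduct.lmul' k (S := A) x ⊗ₜ[k] (1 : A), ?_⟩ : (RingHom.ker (Algebra.TensorProduct.lmul' k (S := A))))
      ⊗ₜ[A ⊗[k] A] (1 : (A ⧸ J) ⊗[k] (A ⧸ J)), ?_⟩
    · rw [RingHom.mem_ker, map_sub]; simp
    · rw [hβ1, map_sub, sub_eq_self]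
      change _ ∈ K
      rw [hK]
      exact Ideal.mem_sup_left (Ideal.mem_map_of_mem _ hz)
end

section
/- Let k be a field, let A be a commutative k-algebra, let J ⊆ A be an ideal, and set Ā = A/J. Regard Ā as an (Ā ⊗_k A)-algebra via the map ā ⊗ b ↦ ā · b̄, and regard Ā ⊗_k J as an (Ā ⊗_k A)-submodule of Ā ⊗_k A. Then there is a canonical isomorphism of Ā-modules (Ā ⊗_k J) ⊗_{(Ā ⊗_k A)} Ā ≅ J/J², sending (ā ⊗ j) ⊗ 1 to ā · (j mod J²). -/
set_option synthInstance.maxHeartbeats 1000000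
set_option maxHeartbeats 1000000

open TensorProduct

section RightModule

variable (k : Type*) [CommRing k] (S : Type*) [CommRing S] [Algebra k S]
variable (M : Type*) [AddCommGroup M] [Module k M]
variable (N : Type*) [AddCommGroup N] [Module k N] [Module S N] [IsScalarTower k S N]

/-- Scalar multiplication by `s : S` on `N`, as a `k`-linear map. -/
noncomputable def rightSMulMap (s : S) : N →ₗ[k] N where
  toFun n := s • n
  map_add' := smul_add s
  map_smul' c n := (smul_comm c s n).symm

/-- The `S`-module structure on `M ⊗[k] N` acting through the right tensor factor:
`s • (m ⊗ n) = m ⊗ (s • n)`. -/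
noncomputable def rightModule : Module S (M ⊗[k] N) where
  smul s x := LinearMap.lTensor M (rightSMulMap k S N s) x
  one_smul x := by
    have h : rightSMulMap k S N (1 : S) = LinearMap.id := by
      ext n; simp [rightSMulMap]
    show LinearMap.lTensor M (rightSMulMap k S N 1) x = x
    rw [h, LinearMap.lTensor_id]; rfl
  mul_smul s t x := by
    have h : rightSMulMap k S N (s * t) =
        (rightSMulMap k S N s) ∘ₗ (rightSMulMap k S N t) := by
      ext n; simp [rightSMulMap, mul_smul]
    show LinearMap.lTensor M (rightSMulMap k S N (s * t)) x = _
    rw [h, LinearMap.lTensor_comp]; rfl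
  smul_zero s := map_zero _
  smul_add s x y := map_add _ x y
  add_smul s t x := by
    have h : rightSMulMap k S N (s + t) = rightSMulMap k S N s + rightSMulMap k S N t := by
      ext n; simp [rightSMulMap, add_smul]
    show LinearMap.lTensor M (rightSMulMap k S N (s + t)) x = _
    rw [h, LinearMap.lTensor_add]; rfl
  zero_smul x := by
    have h : rightSMulMap k S N (0 : S) = 0 := by
      ext n; simp [rightSMulMap]
    show LinearMap.lTensor M (rightSMulMap k S N 0) x = 0
    rw [h, LinearMap.lTensor_zero]; rfl

end RightModule

variable (k : Type*) [Field k]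
variable (A : Type*) [CommRing A] [Algebra k A]
variable (J : Ideal A)

theorem exists_phi_aux : ∃ phi : ((A ⧸ J) ⊗[k] A) →+ J.Cotangent,
    ∀ (a : A ⧸ J) (j : J), phi (a ⊗ₜ[k] (j : A)) = a • J.toCotangent j := by
  have hAsmul : ∀ (b : A) (x : J.Cotangent), (Ideal.Quotient.mk J b) • x = b • x := by
    intro b x
    rfl
  -- a k-linear retraction of J ⊆ A
  obtain ⟨r, hr⟩ := LinearMap.exists_leftInverse_of_injective
    (J.subtype.restrictScalars k) (LinearMap.ker_eq_bot.mpr Subtype.val_injective)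
  have hret : ∀ j : J, J.toCotangent (r (j : A)) = J.toCotangent j := by
    intro j
    have := LinearMap.congr_fun hr j
    exact congrArg _ this
  let B : (A ⧸ J) →+ A →+ J.Cotangent :=
    AddMonoidHom.mk' (fun a => AddMonoidHom.mk' (fun b => a • J.toCotangent (r b))
      (fun b c => by
        rw [map_add r, ← smul_add]; exact congrArg _ (map_add J.toCotangent _ _)))
      (fun a b => by ext c; exact add_smul _ _ _)
  have hB : ∀ a b, B a b = a • J.toCotangent (r b) := fun _ _ => rfl
  have hkB : ∀ (c : k) (a : A ⧸ J) (b : A), B (c • a) b = B a (c • b) := by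
    intro c a b
    rw [hB, hB, map_smul r]
    have h1 : c • a = Ideal.Quotient.mk J (algebraMap k A c) * a := Algebra.smul_def c a
    have h2 : J.toCotangent (c • r b)
        = (algebraMap k A c) • J.toCotangent (r b) := by
      have h3 : c • r b = (algebraMap k A c) • r b :=
        Subtype.ext (Algebra.smul_def c ((r b : A)))
      rw [h3, map_smul]
    rw [h1, h2, ← hAsmul, mul_comm, mul_smul]
  let phi : ((A ⧸ J) ⊗[k] A) →+ J.Cotangent := TensorProduct.liftAddHom B hkB
  refine ⟨phi, ?_⟩
  intro a j
  have : phi (a ⊗ₜ[k] (j : A)) = B a j := TensorProduct.liftAddHom_tmul B hkB a j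
  rw [this, hB, hret]

/-- Let `k` be a field, `A` a commutative `k`-algebra, `J ⊆ A` an ideal and
`Ā = A/J`.  Regard `Ā` as an `(Ā ⊗_k A)`-algebra via `ā ⊗ b ↦ ā·b̄`, and regard `Ā ⊗_k J` as
an `(Ā ⊗_k A)`-submodule of `Ā ⊗_k A`.  Then there is a canonical isomorphism of `Ā`-modules
`(Ā ⊗_k J) ⊗_{Ā ⊗_k A} Ā ≅ J/J²`, sending `(ā ⊗ j) ⊗ 1` to `ā · (j mod J²)`. -/
theorem conormal_as_base_change :
    letI : Algebra ((A ⧸ J) ⊗[k] A) (A ⧸ J) :=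
      ((Algebra.TensorProduct.lmul' k (S := A ⧸ J)).comp
        (Algebra.TensorProduct.map (AlgHom.id k (A ⧸ J))
          (Ideal.Quotient.mkₐ k J))).toRingHom.toAlgebra
    ∀ P : Ideal ((A ⧸ J) ⊗[k] A),
      P = Ideal.span
        {x : (A ⧸ J) ⊗[k] A | ∃ abar : A ⧸ J, ∃ j ∈ J, x = abar ⊗ₜ[k] j} →
    letI : Module (A ⧸ J) (↥P ⊗[(A ⧸ J) ⊗[k] A] (A ⧸ J)) :=
      rightModule ((A ⧸ J) ⊗[k] A) (A ⧸ J) ↥P (A ⧸ J)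
    ∃ e : (↥P ⊗[(A ⧸ J) ⊗[k] A] (A ⧸ J)) ≃ₗ[A ⧸ J] J.Cotangent,
      ∀ (abar : A ⧸ J) (j : ↥J) (h : abar ⊗ₜ[k] (j : A) ∈ P),
        e ((⟨abar ⊗ₜ[k] (j : A), h⟩ : ↥P) ⊗ₜ[(A ⧸ J) ⊗[k] A] (1 : A ⧸ J)) =
          abar • J.toCotangent j := by
  intro P hP
  let alg : Algebra ((A ⧸ J) ⊗[k] A) (A ⧸ J) :=
    ((Algebra.TensorProduct.lmul' k (S := A ⧸ J)).comp
      (Algebra.TensorProduct.map (AlgHom.id k (A ⧸ J))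
        (Ideal.Quotient.mkₐ k J))).toRingHom.toAlgebra
  let modP : Module (A ⧸ J) (↥P ⊗[(A ⧸ J) ⊗[k] A] (A ⧸ J)) :=
    rightModule ((A ⧸ J) ⊗[k] A) (A ⧸ J) ↥P (A ⧸ J)
  have hmem : ∀ (a : A ⧸ J) (j : A), j ∈ J → a ⊗ₜ[k] j ∈ P := by
    intro a j hj
    rw [hP]
    exact Ideal.subset_span ⟨a, j, hj, rfl⟩
  have halg : ∀ (a : A ⧸ J) (b : A),
      algebraMap ((A ⧸ J) ⊗[k] A) (A ⧸ J) (a ⊗ₜ[k] b) = a * Ideal.Quotient.mk J b := by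
    intro a b
    rfl
  have hAsmul : ∀ (b : A) (x : J.Cotangent), (Ideal.Quotient.mk J b) • x = b • x := by
    intro b x
    rfl
  obtain ⟨phi, hphi⟩ := exists_phi_aux k A J
  have hlin : ∀ x ∈ P, ∀ s : (A ⧸ J) ⊗[k] A,
      phi (s * x) = algebraMap ((A ⧸ J) ⊗[k] A) (A ⧸ J) s • phi x := by
    intro x hx
    rw [hP] at hx
    induction hx using Submodule.span_induction with
    | mem x hx =>
      obtain ⟨a, j, hj, rfl⟩ := hx
      intro s
      induction s using TensorProduct.induction_on with
      | zero => rw [zero_mul, map_zero, map_zero, zero_smul]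
      | add s t hs ht => rw [add_mul, map_add, hs, ht, map_add, add_smul]
      | tmul b c =>
        have h1 := hphi a ⟨j, hj⟩
        have h2 := hphi (b * a) (c • ⟨j, hj⟩)
        rw [Algebra.TensorProduct.tmul_mul_tmul, halg]
        refine h2.trans ?_
        refine Eq.trans ?_ (congrArg _ h1.symm)
        rw [map_smul, ← hAsmul, smul_smul, smul_smul]
        congr 1
        ring
    | zero => intro s; rw [mul_zero, map_zero, smul_zero]
    | add x y _ _ hx hy => intro s; rw [mul_add, map_add, hx, hy, map_add, smul_add]
    | smul t x _ hx =>
      intro s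
      rw [smul_eq_mul, ← mul_assoc, hx, hx, map_mul, mul_smul]
  let G : ↥P →+ (A ⧸ J) →+ J.Cotangent :=
    AddMonoidHom.mk' (fun p => AddMonoidHom.mk' (fun a => a • phi (p : (A ⧸ J) ⊗[k] A))
      (fun b c => add_smul _ _ _))
      (fun p q => by
        ext c
        show c • phi ((p : (A ⧸ J) ⊗[k] A) + q) = c • phi p + c • phi q
        rw [map_add, smul_add])
  have hG : ∀ p a, G p a = a • phi (p : (A ⧸ J) ⊗[k] A) := fun _ _ => rfl
  have hGs : ∀ (s : (A ⧸ J) ⊗[k] A) (p : ↥P) (a : A ⧸ J), G (s • p) a = G p (s • a) := by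
    intro s p a
    rw [hG, hG, Algebra.smul_def s a]
    have : phi ((s • p : ↥P) : (A ⧸ J) ⊗[k] A) = _ := hlin p p.2 s
    rw [this, smul_smul, mul_comm]
  let F : (↥P ⊗[(A ⧸ J) ⊗[k] A] (A ⧸ J)) →+ J.Cotangent := TensorProduct.liftAddHom G hGs
  have hF : ∀ (p : ↥P) (a : A ⧸ J), F (p ⊗ₜ a) = a • phi (p : (A ⧸ J) ⊗[k] A) :=
    fun p a => TensorProduct.liftAddHom_tmul G hGs p a
  have hFsmul : ∀ (a : A ⧸ J) x, F (LinearMap.lTensor ↥P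
      (rightSMulMap ((A ⧸ J) ⊗[k] A) (A ⧸ J) (A ⧸ J) a) x) = a • F x := by
    intro a x
    induction x using TensorProduct.induction_on with
    | zero => rw [map_zero, map_zero, smul_zero]
    | add x y hx hy => rw [map_add, map_add, hx, hy, map_add, smul_add]
    | tmul p b =>
      have : rightSMulMap ((A ⧸ J) ⊗[k] A) (A ⧸ J) (A ⧸ J) a b = a * b := rfl
      rw [LinearMap.lTensor_tmul, this, hF, hF, mul_smul]
  have hst : ∀ (s : (A ⧸ J) ⊗[k] A) (p : ↥P) (a : A ⧸ J),
      (s • p) ⊗ₜ[(A ⧸ J) ⊗[k] A] a =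
        p ⊗ₜ[(A ⧸ J) ⊗[k] A] (algebraMap ((A ⧸ J) ⊗[k] A) (A ⧸ J) s * a) := by
    intro s p a
    rw [← Algebra.smul_def]
    exact TensorProduct.smul_tmul s p a
  let psi : J →+ (↥P ⊗[(A ⧸ J) ⊗[k] A] (A ⧸ J)) :=
    { toFun := fun j : J => (⟨1 ⊗ₜ[k] (j : A), hmem 1 j j.2⟩ : ↥P) ⊗ₜ[(A ⧸ J) ⊗[k] A] (1 : A ⧸ J)
      map_zero' := by
        have h0 : (⟨1 ⊗ₜ[k] ((0 : J) : A), hmem 1 _ (0 : J).2⟩ : ↥P) = 0 :=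
          Subtype.ext (TensorProduct.tmul_zero _ _)
        rw [h0, TensorProduct.zero_tmul]
      map_add' := fun i j => by
        have h0 : (⟨1 ⊗ₜ[k] ((i + j : J) : A), hmem 1 _ (i + j).2⟩ : ↥P) =
            ⟨1 ⊗ₜ[k] (i : A), hmem 1 i i.2⟩ + ⟨1 ⊗ₜ[k] (j : A), hmem 1 j j.2⟩ :=
          Subtype.ext (TensorProduct.tmul_add _ _ _)
        rw [h0, TensorProduct.add_tmul] }
  have hpsi : ∀ j : J, psi j = (⟨1 ⊗ₜ[k] (j : A), hmem 1 j j.2⟩ : ↥P) ⊗ₜ[(A ⧸ J) ⊗[k] A] (1 : A ⧸ J) := fun _ => rfl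
  have hpsismul : ∀ (b : A) (j : J), psi (b • j) =
      (⟨1 ⊗ₜ[k] (j : A), hmem 1 j j.2⟩ : ↥P) ⊗ₜ[(A ⧸ J) ⊗[k] A] (Ideal.Quotient.mk J b) := by
    intro b j
    have h1 : (⟨1 ⊗ₜ[k] ((b • j : J) : A), hmem 1 _ (b • j).2⟩ : ↥P) =
        ((1 : A ⧸ J) ⊗ₜ[k] b) • (⟨1 ⊗ₜ[k] (j : A), hmem 1 j j.2⟩ : ↥P) := by
      apply Subtype.ext
      show (1 : A ⧸ J) ⊗ₜ[k] (b * (j : A)) = ((1 : A ⧸ J) ⊗ₜ[k] b) * (1 ⊗ₜ[k] (j : A))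
      rw [Algebra.TensorProduct.tmul_mul_tmul, one_mul]
    rw [hpsi, h1, hst, halg, one_mul, mul_one]
  have hFpsi : ∀ j, F (psi j) = J.toCotangent j := by
    intro j
    rw [hpsi, hF, one_smul]
    exact (hphi 1 j).trans (one_smul _ _)
  have hpsi0 : ∀ j : J, J.toCotangent j = 0 → psi j = 0 := by
    intro j hj
    have hj' : j ∈ (J • ⊤ : Submodule A J) :=
      (Submodule.Quotient.mk_eq_zero _).mp hj
    refine Submodule.smul_induction_on hj' ?_ ?_
    · intro b hb i _
      rw [hpsismul, Ideal.Quotient.eq_zero_iff_mem.mpr hb, TensorProduct.tmul_zero]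
    · intro x y hx hy
      rw [map_add, hx, hy, add_zero]
  have hP1 : ∀ x ∈ P, ∀ (hx : x ∈ P) (a : A ⧸ J),
      ∃ j, psi j = (⟨x, hx⟩ : ↥P) ⊗ₜ[(A ⧸ J) ⊗[k] A] a := by
    intro x hx'
    rw [hP] at hx'
    induction hx' using Submodule.span_induction with
    | mem x hx' =>
      obtain ⟨a, j, hj, rfl⟩ := hx'
      intro h c
      obtain ⟨b, hb⟩ := Ideal.Quotient.mk_surjective (a * c)
      refine ⟨b • ⟨j, hj⟩, ?_⟩
      rw [hpsismul, hb]
      have h1 : (⟨a ⊗ₜ[k] j, h⟩ : ↥P) =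
          (a ⊗ₜ[k] (1 : A)) • (⟨1 ⊗ₜ[k] j, hmem 1 j hj⟩ : ↥P) := by
        apply Subtype.ext
        show a ⊗ₜ[k] j = (a ⊗ₜ[k] (1 : A)) * (1 ⊗ₜ[k] j)
        rw [Algebra.TensorProduct.tmul_mul_tmul, one_mul, mul_one]
      rw [h1, hst, halg, map_one, mul_one]
    | zero =>
      intro h c
      refine ⟨0, ?_⟩
      rw [map_zero]
      exact (TensorProduct.zero_tmul _ c).symm
    | add x y hx1 hy1 hx hy =>
      intro h c
      rw [← Ideal.span, ← hP] at hx1 hy1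
      obtain ⟨i, hi⟩ := hx hx1 c
      obtain ⟨j, hj⟩ := hy hy1 c
      refine ⟨i + j, ?_⟩
      rw [map_add, hi, hj, ← TensorProduct.add_tmul]
      rfl
    | smul t x hx1 hx =>
      intro h c
      rw [← Ideal.span, ← hP] at hx1
      obtain ⟨i, hi⟩ := hx hx1 (algebraMap ((A ⧸ J) ⊗[k] A) (A ⧸ J) t * c)
      refine ⟨i, ?_⟩
      rw [hi, ← hst]
      rfl
  have hpsis : ∀ x, ∃ j, psi j = x := by
    intro x
    induction x using TensorProduct.induction_on with
    | zero => exact ⟨0, map_zero _⟩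
    | add x y hx hy =>
      obtain ⟨i, rfl⟩ := hx
      obtain ⟨j, rfl⟩ := hy
      exact ⟨i + j, map_add _ _ _⟩
    | tmul p a => exact hP1 p p.2 p.2 a
  let L : (↥P ⊗[(A ⧸ J) ⊗[k] A] (A ⧸ J)) →ₗ[A ⧸ J] J.Cotangent :=
    { toFun := F, map_add' := map_add F, map_smul' := hFsmul }
  have hL : Function.Bijective L := by
    constructor
    · intro x y hxy
      obtain ⟨i, rfl⟩ := hpsis x
      obtain ⟨j, rfl⟩ := hpsis y
      have h1 : J.toCotangent i = J.toCotangent j :=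
        (hFpsi i).symm.trans (Eq.trans hxy (hFpsi j))
      have h2 : psi (i - j) = 0 := hpsi0 _ (by rw [map_sub, h1, sub_self])
      have h3 : psi ((i - j) + j) = psi j := by rw [map_add, h2, zero_add]
      rwa [sub_add_cancel] at h3
    · intro y
      obtain ⟨j, rfl⟩ := J.toCotangent_surjective y
      exact ⟨psi j, hFpsi j⟩
  refine ⟨LinearEquiv.ofBijective L hL, ?_⟩
  intro a j h
  have h1 : L ((⟨a ⊗ₜ[k] (j : A), h⟩ : ↥P) ⊗ₜ[(A ⧸ J) ⊗[k] A] (1 : A ⧸ J)) = _ :=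
    hF ⟨a ⊗ₜ[k] (j : A), h⟩ 1
  refine h1.trans ?_
  rw [one_smul]
  exact hphi a j
end
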